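/- Let p be a probability mass function on a finite alphabet Y and let p̂(n) be the empirical distribution of n i.i.d. samples from p. Then H(p) − log(1 + (|Y|−1)/n) ≤ E[H(p̂(n))] ≤ H(p), where H is the Shannon entropy with natural logarithm. -/

import Mathlib

open MeasureTheory Real

/-!
Jensen's inequality for the concave function `x ↦ -x log x` gives the upper bound. For the lower
bound, let `Q` be a random probability vector with mean `q`. Then `H(q) - 𝔼 H(Q)` is the mean
relative entropy `𝔼 ∑ y, Q y * log (Q y / q y)`. Bounding the logarithm by its tangent at `c` shows
that it is at most `log c` whenever `c` is at least `∑ y, 𝔼[(Q y) ^ 2] / q y`, which is one plus the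
mean chi-square divergence. For `Q` the vector of empirical frequencies, the variance of a mean of
`n` pairwise independent indicators allows `c = 1 + (|Y| - 1) / n`.
-/

open ProbabilityTheory

section NegMulLog

lemma mul_one_sub_log_sub_sq_div_le_negMulLog {x a : ℝ} (hx : 0 ≤ x) (ha : 0 < a) :
    x * (1 - log a) - x ^ 2 / a ≤ negMulLog x := by
  rcases hx.eq_or_lt with rfl | hx
  · simp
  have tangent : log x - log a ≤ x / a - 1 := by
    rw [← log_div hx.ne' ha.ne']
    exact log_le_sub_one_of_pos (div_pos hx ha)
  calc x * (1 - log a) - x ^ 2 / a = x * (1 - log a - x / a) := by ring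
    _ ≤ x * -log x := by gcongr; linarith
    _ = negMulLog x := by rw [negMulLog]; ring

variable {Ω : Type*} {mΩ : MeasurableSpace Ω} {P : Measure Ω} {X : Ω → ℝ}

lemma integrable_negMulLog_of_memLp_two [IsFiniteMeasure P] (hX : MemLp X 2 P)
    (hX₀ : 0 ≤ᵐ[P] X) : Integrable (fun ω ↦ negMulLog (X ω)) P := by
  refine ((integrable_const 1).add hX.integrable_sq).mono'
    (continuous_negMulLog.comp_aestronglyMeasurable hX.aestronglyMeasurable) ?_
  filter_upwards [hX₀] with ω (hω : 0 ≤ X ω)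
  have lower : X ω - X ω ^ 2 ≤ negMulLog (X ω) := by
    simpa using mul_one_sub_log_sub_sq_div_le_negMulLog hω one_pos
  have upper : negMulLog (X ω) ≤ 1 - X ω := negMulLog_le_one_sub_self hω
  rw [norm_eq_abs, Pi.add_apply, abs_le]
  constructor <;> nlinarith

lemma integral_negMulLog_le_negMulLog_integral [IsProbabilityMeasure P] (hX : MemLp X 2 P)
    (hX₀ : 0 ≤ᵐ[P] X) : ∫ ω, negMulLog (X ω) ∂P ≤ negMulLog (∫ ω, X ω ∂P) :=
  concaveOn_negMulLog.le_map_integral continuous_negMulLog.continuousOn isClosed_Ici hX₀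
    (hX.integrable one_le_two) (integrable_negMulLog_of_memLp_two hX hX₀)

-- If `∫ X = 0`, then `X` vanishes almost everywhere and the quotient is `0 / 0 = 0`.
lemma negMulLog_integral_add_sub_le_integral_negMulLog [IsFiniteMeasure P] (hX : MemLp X 2 P)
    (hX₀ : 0 ≤ᵐ[P] X) {c : ℝ} (hc : 0 < c) :
    negMulLog (∫ ω, X ω ∂P) + (∫ ω, X ω ∂P) * (1 - log c)
        - (∫ ω, X ω ^ 2 ∂P) / (∫ ω, X ω ∂P) / c
      ≤ ∫ ω, negMulLog (X ω) ∂P := by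
  have hX_int : Integrable X P := hX.integrable one_le_two
  set q : ℝ := ∫ ω, X ω ∂P with hq_def
  rcases (integral_nonneg_of_ae hX₀).eq_or_lt with hq | hq
  · have hX_zero : X =ᵐ[P] 0 := (integral_eq_zero_iff_of_nonneg_ae hX₀ hX_int).1 hq.symm
    have h_zero : ∫ ω, negMulLog (X ω) ∂P = 0 :=
      integral_eq_zero_of_ae (hX_zero.mono fun ω hω ↦ by simp [hω])
    simp [h_zero, hq_def, ← hq]
  · calc negMulLog q + q * (1 - log c) - (∫ ω, X ω ^ 2 ∂P) / q / c
        = ∫ ω, (X ω * (1 - log (q * c)) - X ω ^ 2 / (q * c)) ∂P := by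
          rw [integral_sub (hX_int.mul_const _) (hX.integrable_sq.div_const _),
            integral_mul_const, integral_div, log_mul hq.ne' hc.ne', negMulLog, ← hq_def]
          ring
      _ ≤ ∫ ω, negMulLog (X ω) ∂P := by
          refine integral_mono_ae ((hX_int.mul_const _).sub (hX.integrable_sq.div_const _))
            (integrable_negMulLog_of_memLp_two hX hX₀) ?_
          filter_upwards [hX₀] with ω hω
          exact mul_one_sub_log_sub_sq_div_le_negMulLog hω (mul_pos hq hc)

end NegMulLog

section ShannonEntropy

/-- The Shannon entropy, with natural logarithm, of a vector of weights; `negMulLog 0 = 0` encodes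
the convention `0 log 0 = 0`. -/
noncomputable def shannonEntropy {Y : Type*} [Fintype Y] (q : Y → ℝ) : ℝ :=
  ∑ y, negMulLog (q y)

variable {Ω Y : Type*} [Fintype Y] {mΩ : MeasurableSpace Ω} {P : Measure Ω} {Q : Y → Ω → ℝ}

lemma integral_shannonEntropy [IsFiniteMeasure P] (hQ : ∀ y, MemLp (Q y) 2 P)
    (hQ₀ : ∀ y, 0 ≤ᵐ[P] Q y) :
    ∫ ω, shannonEntropy (Q · ω) ∂P = ∑ y, ∫ ω, negMulLog (Q y ω) ∂P :=
  integral_finsetSum _ fun y _ ↦ integrable_negMulLog_of_memLp_two (hQ y) (hQ₀ y)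

theorem integral_shannonEntropy_le [IsProbabilityMeasure P] (hQ : ∀ y, MemLp (Q y) 2 P)
    (hQ₀ : ∀ y, 0 ≤ᵐ[P] Q y) :
    ∫ ω, shannonEntropy (Q · ω) ∂P ≤ shannonEntropy fun y ↦ ∫ ω, Q y ω ∂P := by
  rw [integral_shannonEntropy hQ hQ₀]
  exact Finset.sum_le_sum fun y _ ↦ integral_negMulLog_le_negMulLog_integral (hQ y) (hQ₀ y)

theorem shannonEntropy_integral_sub_log_le [IsFiniteMeasure P] (hQ : ∀ y, MemLp (Q y) 2 P)
    (hQ₀ : ∀ y, 0 ≤ᵐ[P] Q y) (hQ₁ : ∑ y, ∫ ω, Q y ω ∂P = 1) {c : ℝ} (hc : 0 < c)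
    (hQc : ∑ y, (∫ ω, Q y ω ^ 2 ∂P) / ∫ ω, Q y ω ∂P ≤ c) :
    shannonEntropy (fun y ↦ ∫ ω, Q y ω ∂P) - log c ≤ ∫ ω, shannonEntropy (Q · ω) ∂P := by
  have hQc_div : (∑ y, (∫ ω, Q y ω ^ 2 ∂P) / ∫ ω, Q y ω ∂P) / c ≤ 1 :=
    div_le_one_of_le₀ hQc hc.le
  calc shannonEntropy (fun y ↦ ∫ ω, Q y ω ∂P) - log c
      ≤ shannonEntropy (fun y ↦ ∫ ω, Q y ω ∂P) + (1 - log c)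
          - (∑ y, (∫ ω, Q y ω ^ 2 ∂P) / ∫ ω, Q y ω ∂P) / c := by linarith
    _ = ∑ y, (negMulLog (∫ ω, Q y ω ∂P) + (∫ ω, Q y ω ∂P) * (1 - log c)
          - (∫ ω, Q y ω ^ 2 ∂P) / (∫ ω, Q y ω ∂P) / c) := by
        rw [Finset.sum_sub_distrib, Finset.sum_add_distrib, ← Finset.sum_mul, ← Finset.sum_div,
          hQ₁, one_mul, shannonEntropy]
    _ ≤ ∑ y, ∫ ω, negMulLog (Q y ω) ∂P :=
        Finset.sum_le_sum fun y _ ↦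
          negMulLog_integral_add_sub_le_integral_negMulLog (hQ y) (hQ₀ y) hc
    _ = ∫ ω, shannonEntropy (Q · ω) ∂P := (integral_shannonEntropy hQ hQ₀).symm

end ShannonEntropy

lemma variance_indicator_one {Ω : Type*} {mΩ : MeasurableSpace Ω} {P : Measure Ω}
    [IsProbabilityMeasure P] {A : Set Ω} (hA : MeasurableSet A) :
    Var[A.indicator 1; P] = P.real A * (1 - P.real A) := by
  have h_sq : A.indicator (1 : Ω → ℝ) ^ 2 = A.indicator 1 := by
    ext ω
    by_cases hω : ω ∈ A <;> simp [hω]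
  have h_memLp : MemLp (A.indicator (1 : Ω → ℝ)) 2 P :=
    memLp_indicator_const 2 hA 1 (.inr (measure_ne_top P A))
  rw [variance_eq_sub h_memLp, h_sq, integral_indicator_one hA]
  ring

section SampleMean

variable {ι Ω Y : Type*} [Fintype ι] {mΩ : MeasurableSpace Ω}
  [MeasurableSpace Y] {P : Measure Ω} {μ : Measure Y} {X : ι → Ω → Y} {f : Y → ℝ}

lemma integral_sampleMean [Nonempty ι] (hX : ∀ i, HasLaw (X i) μ P) (hf : Integrable f μ) :
    ∫ ω, (∑ i, f (X i ω)) / Fintype.card ι ∂P = ∫ y, f y ∂μ := by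
  have h_int (i : ι) : Integrable (fun ω ↦ f (X i ω)) P :=
    ((hX i).map_eq ▸ hf).comp_aemeasurable (hX i).aemeasurable
  have h_eq (i : ι) : ∫ ω, f (X i ω) ∂P = ∫ y, f y ∂μ :=
    (hX i).integral_comp hf.aestronglyMeasurable
  rw [integral_div, integral_finsetSum _ fun i _ ↦ h_int i]
  simp [h_eq]

lemma variance_sampleMean [IsFiniteMeasure P] (hX : ∀ i, HasLaw (X i) μ P)
    (hX_indep : Pairwise fun i j ↦ X i ⟂ᵢ[P] X j) (hf : MemLp f 2 μ) :
    Var[fun ω ↦ (∑ i, f (X i ω)) / Fintype.card ι; P] = Var[f; μ] / Fintype.card ι := by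
  have h_memLp (i : ι) : MemLp (f ∘ X i) 2 P :=
    ((hX i).map_eq ▸ hf).comp_of_map (hX i).aemeasurable
  have h_aemeas (i : ι) : AEMeasurable f (P.map (X i)) := (hX i).map_eq ▸ hf.aemeasurable
  have h_var (i : ι) : Var[f ∘ X i; P] = Var[f; μ] := by
    rw [← (hX i).map_eq, variance_map (h_aemeas i) (hX i).aemeasurable]
  have h_sum : Var[∑ i, f ∘ X i; P] = Fintype.card ι * Var[f; μ] := by
    rw [IndepFun.variance_sum (fun i _ ↦ h_memLp i)
      fun i _ j _ hij ↦ (hX_indep hij).comp₀ (hX i).aemeasurable (hX j).aemeasurable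
        (h_aemeas i) (h_aemeas j)]
    simp [h_var]
  have h_eq : (fun ω ↦ (∑ i, f (X i ω)) / Fintype.card ι)
      = fun ω ↦ (Fintype.card ι : ℝ)⁻¹ * (∑ i, f ∘ X i) ω := by
    ext ω
    simp [div_eq_inv_mul]
  rw [h_eq, variance_const_mul, h_sum]
  field_simp

end SampleMean

section EmpiricalFreq

/-- The empirical frequency of the letter `y` in the sample `x`; over all letters `y` these are the
weights of the empirical distribution of `x`. -/
noncomputable def empiricalFreq {ι Y : Type*} [Fintype ι] [DecidableEq Y] (x : ι → Y) (y : Y) : ℝ :=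
  (∑ i, if x i = y then (1 : ℝ) else 0) / Fintype.card ι

variable {ι Ω Y : Type*} [Fintype ι] [DecidableEq Y]

lemma empiricalFreq_eq_sum_indicator (x : ι → Y) (y : Y) :
    empiricalFreq x y = (∑ i, ({y} : Set Y).indicator 1 (x i)) / Fintype.card ι := by
  simp [empiricalFreq, Set.indicator_apply]

lemma empiricalFreq_nonneg (x : ι → Y) (y : Y) : 0 ≤ empiricalFreq x y := by
  unfold empiricalFreq
  positivity

variable {mΩ : MeasurableSpace Ω} [MeasurableSpace Y] [MeasurableSingletonClass Y]
  {P : Measure Ω} {μ : Measure Y} {X : ι → Ω → Y}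

lemma memLp_empiricalFreq [IsFiniteMeasure P] (hX : ∀ i, AEMeasurable (X i) P) (y : Y)
    (r : ENNReal) : MemLp (fun ω ↦ empiricalFreq (X · ω) y) r P := by
  have h_indicator (i : ι) : MemLp (fun ω ↦ ({y} : Set Y).indicator (1 : Y → ℝ) (X i ω)) r P :=
    (memLp_indicator_const r (measurableSet_singleton y) 1
      (.inr (measure_ne_top (P.map (X i)) _))).comp_of_map (hX i)
  simp only [empiricalFreq_eq_sum_indicator, div_eq_mul_inv]
  exact (memLp_finsetSum _ fun i _ ↦ h_indicator i).mul_const _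

variable [Nonempty ι]

lemma integral_empiricalFreq [IsFiniteMeasure μ] (hX : ∀ i, HasLaw (X i) μ P) (y : Y) :
    ∫ ω, empiricalFreq (X · ω) y ∂P = μ.real {y} := by
  have h_int : Integrable (({y} : Set Y).indicator (1 : Y → ℝ)) μ :=
    (integrable_const 1).indicator (measurableSet_singleton y)
  simp only [empiricalFreq_eq_sum_indicator]
  rw [integral_sampleMean hX h_int]
  exact integral_indicator_one (measurableSet_singleton y)

lemma variance_empiricalFreq [IsProbabilityMeasure μ] (hX : ∀ i, HasLaw (X i) μ P)
    (hX_indep : Pairwise fun i j ↦ X i ⟂ᵢ[P] X j) (y : Y) :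
    Var[fun ω ↦ empiricalFreq (X · ω) y; P]
      = μ.real {y} * (1 - μ.real {y}) / Fintype.card ι := by
  have : IsProbabilityMeasure P := (hX (Classical.arbitrary ι)).isProbabilityMeasure
  have h_memLp : MemLp (({y} : Set Y).indicator (1 : Y → ℝ)) 2 μ :=
    memLp_indicator_const 2 (measurableSet_singleton y) 1 (.inr (measure_ne_top μ _))
  simp only [empiricalFreq_eq_sum_indicator]
  rw [variance_sampleMean hX hX_indep h_memLp,
    variance_indicator_one (measurableSet_singleton y)]

lemma integral_empiricalFreq_sq [IsProbabilityMeasure μ] (hX : ∀ i, HasLaw (X i) μ P)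
    (hX_indep : Pairwise fun i j ↦ X i ⟂ᵢ[P] X j) (y : Y) :
    ∫ ω, empiricalFreq (X · ω) y ^ 2 ∂P
      = μ.real {y} * (μ.real {y} + (1 - μ.real {y}) / Fintype.card ι) := by
  have : IsProbabilityMeasure P := (hX (Classical.arbitrary ι)).isProbabilityMeasure
  have h_var := variance_empiricalFreq hX hX_indep y
  rw [variance_eq_sub (memLp_empiricalFreq (fun i ↦ (hX i).aemeasurable) y 2),
    integral_empiricalFreq hX y] at h_var
  simp only [Pi.pow_apply] at h_var
  linear_combination h_var

lemma sum_integral_empiricalFreq_sq_div_le [Fintype Y] [IsProbabilityMeasure μ]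
    (hX : ∀ i, HasLaw (X i) μ P) (hX_indep : Pairwise fun i j ↦ X i ⟂ᵢ[P] X j) :
    ∑ y, (∫ ω, empiricalFreq (X · ω) y ^ 2 ∂P) / ∫ ω, empiricalFreq (X · ω) y ∂P
      ≤ 1 + ((Fintype.card Y : ℝ) - 1) / Fintype.card ι := by
  calc ∑ y, (∫ ω, empiricalFreq (X · ω) y ^ 2 ∂P) / ∫ ω, empiricalFreq (X · ω) y ∂P
      ≤ ∑ y, (μ.real {y} + (1 - μ.real {y}) / Fintype.card ι) := by
        refine Finset.sum_le_sum fun y _ ↦ ?_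
        have h_le_one : μ.real {y} ≤ 1 := measureReal_le_one
        rw [integral_empiricalFreq_sq hX hX_indep, integral_empiricalFreq hX]
        -- only an inequality, since the quotient is `0 / 0 = 0` when `y` has probability zero
        rw [mul_div_right_comm]
        refine mul_le_of_le_one_left ?_ (div_self_le_one _)
        have := sub_nonneg.2 h_le_one
        positivity
    _ = 1 + ((Fintype.card Y : ℝ) - 1) / Fintype.card ι := by
        rw [Finset.sum_add_distrib, ← Finset.sum_div, Finset.sum_sub_distrib,
          sum_measureReal_singleton]
        simp

end EmpiricalFreq

theorem stmt_2_general {ι Ω Y : Type*} [Fintype ι] [Nonempty ι] [Fintype Y] [DecidableEq Y]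
    {mΩ : MeasurableSpace Ω} [MeasurableSpace Y] [MeasurableSingletonClass Y]
    {P : Measure Ω} {μ : Measure Y} [IsProbabilityMeasure μ] {X : ι → Ω → Y}
    (hX : ∀ i, HasLaw (X i) μ P) (hX_indep : Pairwise fun i j ↦ X i ⟂ᵢ[P] X j) :
    shannonEntropy (fun y ↦ μ.real {y})
          - log (1 + ((Fintype.card Y : ℝ) - 1) / Fintype.card ι)
        ≤ ∫ ω, shannonEntropy (empiricalFreq (X · ω)) ∂P
      ∧ ∫ ω, shannonEntropy (empiricalFreq (X · ω)) ∂P ≤ shannonEntropy fun y ↦ μ.real {y} := by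
  have : IsProbabilityMeasure P := (hX (Classical.arbitrary ι)).isProbabilityMeasure
  have h_memLp (y : Y) : MemLp (fun ω ↦ empiricalFreq (X · ω) y) 2 P :=
    memLp_empiricalFreq (fun i ↦ (hX i).aemeasurable) y 2
  have h_nonneg (y : Y) : 0 ≤ᵐ[P] fun ω ↦ empiricalFreq (X · ω) y :=
    .of_forall fun ω ↦ empiricalFreq_nonneg (X · ω) y
  have h_sum : ∑ y, ∫ ω, empiricalFreq (X · ω) y ∂P = 1 := by
    simp [integral_empiricalFreq hX]
  have h_pos : (0 : ℝ) < 1 + ((Fintype.card Y : ℝ) - 1) / Fintype.card ι := by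
    have : Nonempty Y := nonempty_of_isProbabilityMeasure μ
    have h_card : (1 : ℝ) ≤ Fintype.card Y := by exact_mod_cast Fintype.card_pos
    have := sub_nonneg.2 h_card
    positivity
  simp only [← integral_empiricalFreq hX]
  exact ⟨shannonEntropy_integral_sub_log_le h_memLp h_nonneg h_sum h_pos
    (sum_integral_empiricalFreq_sq_div_le hX hX_indep), integral_shannonEntropy_le h_memLp h_nonneg⟩

/-- Bias of the plug-in entropy estimator:
`H(p) − log(1 + (|Y|−1)/n) ≤ E[H(p̂(n))] ≤ H(p)`. -/
theorem stmt_2 {Y : Type*} [Fintype Y] [DecidableEq Y] [MeasurableSpace Y]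
    [MeasurableSingletonClass Y] (p : PMF Y) (n : ℕ) (hn : 0 < n) :
    (∑ y, Real.negMulLog ((p y).toReal))
        - Real.log (1 + ((Fintype.card Y : ℝ) - 1) / n)
      ≤ (∫ ω : Fin n → Y,
          (∑ y, Real.negMulLog ((∑ ℓ, if ω ℓ = y then (1 : ℝ) else 0) / n))
          ∂(Measure.pi fun _ : Fin n => p.toMeasure))
    ∧ (∫ ω : Fin n → Y,
          (∑ y, Real.negMulLog ((∑ ℓ, if ω ℓ = y then (1 : ℝ) else 0) / n))
          ∂(Measure.pi fun _ : Fin n => p.toMeasure))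
      ≤ ∑ y, Real.negMulLog ((p y).toReal) := by
  have : NeZero n := ⟨hn.ne'⟩
  simpa only [shannonEntropy, empiricalFreq, Measure.real, Fintype.card_fin,
    PMF.toMeasure_apply_singleton _ _ (measurableSet_singleton _)]
    using stmt_2_general (X := fun (ℓ : Fin n) (ω : Fin n → Y) ↦ ω ℓ)
      (fun ℓ ↦ (measurePreserving_eval (fun _ ↦ p.toMeasure) ℓ).hasLaw)
      fun _ _ hij ↦ (iIndepFun_pi fun _ ↦ aemeasurable_id).indepFun hij
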